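/- Let X and Q be real Hilbert spaces, and let a : X × X → ℝ and b : X × Q → ℝ be bilinear forms satisfying, for positive constants α, C, D: a(u,u) ≥ α‖u‖_X² for all u ∈ X; |a(u,v)| ≤ C‖u‖_X ‖v‖_X for all u,v ∈ X; and |b(u,μ)| ≤ D‖u‖_X ‖μ‖_Q for all u ∈ X, μ ∈ Q. Let X_h ⊆ X and Q_h ⊆ Q be closed linear subspaces, and suppose there exists a constant β_h > 0 such that sup_{v_h ∈ X_h, v_h ≠ 0} b(v_h, μ_h)/‖v_h‖_X ≥ β_h ‖μ_h‖_Q for all μ_h ∈ Q_h. Then for every pair of continuous linear functionals c : X → ℝ and d : Q → ℝ there exists a unique pair (u_h, λ_h) ∈ X_h × Q_h such that a(u_h, v_h) + b(v_h, λ_h) = c(v_h) for all v_h ∈ X_h and b(u_h, μ_h) = d(μ_h) for all μ_h ∈ Q_h. -/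

import Mathlib

/-!
Let `A` and `B` be the operators on the Hilbert spaces `Xh` and `Qh` that represent `a` and `b`
through the Riesz isomorphism. The discrete problem becomes `A u + B† λ = f`, `B u = g`, and the
inf-sup condition says that `B†` is bounded below, so that `B` is onto and `B†` has range
`(ker B)ᗮ`. Brezzi's argument: choose `w` with `B w = g`, correct it by an element of `ker B` to a
vector `u` for which `f - A u` is orthogonal to `ker B`, and write this residual as `B† λ`. The
correction exists, and the homogeneous problem has only the zero solution, because the compression
of `A` to `ker B` is coercive, hence invertible.
-/

section Operators

open ContinuousLinearMap

variable {𝕜 V M : Type*} [RCLike 𝕜]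
  [NormedAddCommGroup V] [InnerProductSpace 𝕜 V]
  [NormedAddCommGroup M] [InnerProductSpace 𝕜 M]

/-- The compression of an operator `A` to a subspace `K`: `A` restricted to `K`, followed by the
orthogonal projection onto `K`. It represents the restriction to `K` of the form `⟪A u, v⟫`. -/
noncomputable def compression (A : V →L[𝕜] V) (K : Submodule 𝕜 V) [K.HasOrthogonalProjection] :
    K →L[𝕜] K :=
  K.orthogonalProjectionOnto ∘L A ∘L K.subtypeL

lemma inner_compression (A : V →L[𝕜] V) (K : Submodule 𝕜 V) [K.HasOrthogonalProjection]
    (u v : K) : inner 𝕜 (compression A K u) v = inner 𝕜 (A u) (v : V) :=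
  K.inner_orthogonalProjectionOnto_eq_of_mem_right v (A u)

variable [CompleteSpace V]

lemma bijective_of_coercive {A : V →L[𝕜] V} {α : ℝ} (hα : 0 < α)
    (hA : ∀ v, α * ‖v‖ ^ 2 ≤ ‖inner 𝕜 (A v) v‖) : Function.Bijective A := by
  lift α to NNReal using hα.le
  refine isUnit_iff_bijective.mp (isUnit_of_forall_le_norm_inner_map A (c := α) hα fun v ↦ ?_)
  rw [mul_comm]
  exact hA v

variable [CompleteSpace M]

lemma surjective_of_adjoint_bounded_below {B : V →L[𝕜] M} {β : ℝ} (hβ : 0 < β)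
    (hB : ∀ μ, β * ‖μ‖ ≤ ‖adjoint B μ‖) : Function.Surjective B := by
  have hcoercive : ∀ μ, β ^ 2 * ‖μ‖ ^ 2 ≤ ‖inner 𝕜 ((B ∘L adjoint B) μ) μ‖ := fun μ ↦
    calc
      β ^ 2 * ‖μ‖ ^ 2 = (β * ‖μ‖) ^ 2 := (mul_pow ..).symm
      _ ≤ ‖adjoint B μ‖ ^ 2 := by gcongr; exact hB μ
      _ = ‖inner 𝕜 ((B ∘L adjoint B) μ) μ‖ := by
        rw [comp_apply, ← adjoint_inner_right, inner_self_eq_norm_sq_to_K]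
        simp
  exact .of_comp (bijective_of_coercive (pow_pos hβ 2) hcoercive).surjective

lemma orthogonal_ker_eq_range_adjoint_of_bounded_below {B : V →L[𝕜] M} {β : ℝ} (hβ : 0 < β)
    (hB : ∀ μ, β * ‖μ‖ ≤ ‖adjoint B μ‖) : B.kerᗮ = (adjoint B).range := by
  have hanti : AntilipschitzWith (β⁻¹).toNNReal (adjoint B) :=
    antilipschitz_of_bound _ fun μ ↦ by
      rw [Real.coe_toNNReal _ (inv_nonneg.mpr hβ.le), ← div_eq_inv_mul, le_div_iff₀' hβ]
      exact hB μ
  rw [orthogonal_ker]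
  exact (hanti.isClosed_range (adjoint B).uniformContinuous).submodule_topologicalClosure_eq

/-- The block operator `(u, l) ↦ (A u + B† l, B u)` of a saddle point problem. -/
noncomputable def saddlePointOperator (A : V →L[𝕜] V) (B : V →L[𝕜] M) : V × M →L[𝕜] V × M :=
  (A.coprod (adjoint B)).prod (B ∘L fst 𝕜 V M)

lemma saddlePointOperator_apply (A : V →L[𝕜] V) (B : V →L[𝕜] M) (p : V × M) :
    saddlePointOperator A B p = (A p.1 + adjoint B p.2, B p.1) :=
  rfl

lemma injective_saddlePointOperator {A : V →L[𝕜] V} {B : V →L[𝕜] M}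
    (hA : Function.Injective (compression A B.ker)) (hB : Function.Injective (adjoint B)) :
    Function.Injective (saddlePointOperator A B) := by
  refine (injective_iff_map_eq_zero _).mpr fun ⟨u, l⟩ h ↦ ?_
  obtain ⟨hres, hker⟩ : A u + adjoint B l = 0 ∧ B u = 0 := by
    rwa [saddlePointOperator_apply, Prod.mk_eq_zero] at h
  have hcompr : compression A B.ker ⟨u, hker⟩ = 0 := by
    refine ext_inner_right 𝕜 fun v ↦ ?_
    have hv : B v = 0 := v.2
    rw [inner_compression, eq_neg_of_add_eq_zero_left hres, inner_neg_left, adjoint_inner_left,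
      hv, inner_zero_right, neg_zero, inner_zero_left]
  obtain rfl : u = 0 := congrArg Subtype.val ((map_eq_zero_iff _ hA).mp hcompr)
  have hl : adjoint B l = 0 := by rwa [map_zero, zero_add] at hres
  rw [(map_eq_zero_iff _ hB).mp hl, Prod.mk_zero_zero]

lemma surjective_saddlePointOperator {A : V →L[𝕜] V} {B : V →L[𝕜] M}
    (hA : Function.Surjective (compression A B.ker)) (hB : Function.Surjective B)
    (hrange : B.kerᗮ ≤ (adjoint B).range) : Function.Surjective (saddlePointOperator A B) := by
  rintro ⟨f, g⟩
  obtain ⟨w, hw⟩ := hB g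
  obtain ⟨z, hz⟩ := hA (B.ker.orthogonalProjectionOnto (f - A w))
  have hres : f - A (w + z) ∈ B.kerᗮ := by
    rw [← Submodule.orthogonalProjectionOnto_eq_zero_iff, map_add, ← sub_sub, map_sub, sub_eq_zero]
    exact hz.symm
  obtain ⟨l, hl⟩ : ∃ l, adjoint B l = f - A (w + z) := hrange hres
  have hz_ker : B z = 0 := z.2
  refine ⟨(w + z, l), ?_⟩
  rw [saddlePointOperator_apply, hl, add_sub_cancel, map_add B, hw, hz_ker, add_zero]

theorem bijective_saddlePointOperator {A : V →L[𝕜] V} {B : V →L[𝕜] M} {β : ℝ} (hβ : 0 < β)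
    (hA : Function.Bijective (compression A B.ker)) (hB : ∀ μ, β * ‖μ‖ ≤ ‖adjoint B μ‖) :
    Function.Bijective (saddlePointOperator A B) := by
  have hinj : Function.Injective (adjoint B) := (injective_iff_map_eq_zero _).mpr fun μ hμ ↦ by
    have := hB μ
    rw [hμ, norm_zero] at this
    exact norm_le_zero_iff.mp (nonpos_of_mul_nonpos_right this hβ)
  exact ⟨injective_saddlePointOperator hA.injective hinj,
    surjective_saddlePointOperator hA.surjective (surjective_of_adjoint_bounded_below hβ hB)
      (orthogonal_ker_eq_range_adjoint_of_bounded_below hβ hB).le⟩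

end Operators

section BilinearForms

open ContinuousLinearMap InnerProductSpace

variable {E V M : Type*} [SeminormedAddCommGroup E] [NormedSpace ℝ E]
  [NormedAddCommGroup V] [InnerProductSpace ℝ V] [CompleteSpace V]
  [NormedAddCommGroup M] [InnerProductSpace ℝ M] [CompleteSpace M]

/-- The operator that represents a bounded bilinear form `b` through the Riesz isomorphism:
`⟪rieszOperator b u, μ⟫ = b u μ`. -/
noncomputable def rieszOperator (b : E →L[ℝ] M →L[ℝ] ℝ) : E →L[ℝ] M :=
  (toDual ℝ M).symm.toContinuousLinearEquiv.toContinuousLinearMap.comp b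

lemma toDual_rieszOperator (b : E →L[ℝ] M →L[ℝ] ℝ) (u : E) :
    toDual ℝ M (rieszOperator b u) = b u :=
  (toDual ℝ M).apply_symm_apply (b u)

lemma toDual_adjoint_rieszOperator (b : V →L[ℝ] M →L[ℝ] ℝ) (μ : M) :
    toDual ℝ V (adjoint (rieszOperator b) μ) = b.flip μ := by
  ext v
  rw [toDual_apply_apply, adjoint_inner_left, real_inner_comm, ← toDual_apply_apply (𝕜 := ℝ),
    toDual_rieszOperator, flip_apply]

theorem existsUnique_saddlePoint {a : V →L[ℝ] V →L[ℝ] ℝ} {b : V →L[ℝ] M →L[ℝ] ℝ} {α β : ℝ}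
    (hα : 0 < α) (hβ : 0 < β) (ha : ∀ v, b v = 0 → α * ‖v‖ ^ 2 ≤ a v v)
    (hb : ∀ μ, β * ‖μ‖ ≤ ‖b.flip μ‖) (f : V →L[ℝ] ℝ) (g : M →L[ℝ] ℝ) :
    ∃! p : V × M, a p.1 + b.flip p.2 = f ∧ b p.1 = g := by
  let A := rieszOperator a
  let B := rieszOperator b
  have hA : Function.Bijective (compression A B.ker) := by
    refine bijective_of_coercive hα fun v ↦ ?_
    have hv : b v = 0 := (toDual ℝ M).symm.map_eq_zero_iff.mp v.2
    rw [inner_compression, ← toDual_apply_apply (𝕜 := ℝ), toDual_rieszOperator]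
    exact (ha v hv).trans (le_abs_self _)
  have hB : ∀ μ, β * ‖μ‖ ≤ ‖adjoint B μ‖ := fun μ ↦ by
    rw [← (toDual ℝ V).norm_map, toDual_adjoint_rieszOperator]
    exact hb μ
  have hequiv : ∀ p : V × M, (a p.1 + b.flip p.2 = f ∧ b p.1 = g) ↔
      saddlePointOperator A B p = ((toDual ℝ V).symm f, (toDual ℝ M).symm g) := fun p ↦ by
    rw [saddlePointOperator_apply, Prod.mk_inj, LinearIsometryEquiv.eq_symm_apply,
      LinearIsometryEquiv.eq_symm_apply, map_add, toDual_rieszOperator, toDual_rieszOperator,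
      toDual_adjoint_rieszOperator]
  simp only [hequiv]
  exact (bijective_saddlePointOperator hβ hA hB).existsUnique _

end BilinearForms

lemma sSup_div_norm_le {E : Type*} [NormedAddCommGroup E] {s : Set E} {φ : E → ℝ} {K : ℝ}
    (hK : 0 ≤ K) (hφ : ∀ v ∈ s, φ v ≤ K * ‖v‖) :
    sSup {r : ℝ | ∃ v ∈ s, v ≠ 0 ∧ r = φ v / ‖v‖} ≤ K := by
  refine Real.sSup_le ?_ hK
  rintro r ⟨v, hv, hv0, rfl⟩
  exact (div_le_iff₀ (norm_pos_iff.mpr hv0)).mpr (hφ v hv)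

theorem discrete_saddle_point_wellposed_general
    {X Q : Type*}
    [NormedAddCommGroup X] [InnerProductSpace ℝ X] [NormedAddCommGroup Q] [InnerProductSpace ℝ Q]
    (a : X →ₗ[ℝ] X →ₗ[ℝ] ℝ) (b : X →ₗ[ℝ] Q →ₗ[ℝ] ℝ) {α C D : ℝ} (hα : 0 < α)
    {Xh : Submodule ℝ X} {Qh : Submodule ℝ Q}
    (hXh : IsComplete (Xh : Set X)) (hQh : IsComplete (Qh : Set Q))
    (hcoer : ∀ u ∈ Xh, (∀ μ ∈ Qh, b u μ = 0) → α * ‖u‖ ^ 2 ≤ a u u)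
    (habd : ∀ u ∈ Xh, ∀ v ∈ Xh, |a u v| ≤ C * ‖u‖ * ‖v‖)
    (hbbd : ∀ u ∈ Xh, ∀ μ ∈ Qh, |b u μ| ≤ D * ‖u‖ * ‖μ‖)
    {βh : ℝ} (hβh : 0 < βh)
    (hinfsup : ∀ μh ∈ Qh,
      βh * ‖μh‖ ≤ sSup {r : ℝ | ∃ vh ∈ Xh, vh ≠ 0 ∧ r = b vh μh / ‖vh‖})
    (c : X →L[ℝ] ℝ) (d : Q →L[ℝ] ℝ) :
    ∃! p : X × Q, p.1 ∈ Xh ∧ p.2 ∈ Qh ∧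
      (∀ vh ∈ Xh, a p.1 vh + b vh p.2 = c vh) ∧
      (∀ μh ∈ Qh, b p.1 μh = d μh) := by
  have := hXh.completeSpace_coe
  have := hQh.completeSpace_coe
  let ah : Xh →L[ℝ] Xh →L[ℝ] ℝ :=
    (a.domRestrict₁₂ Xh Xh).mkContinuous₂ C fun u v ↦ habd u u.2 v v.2
  let bh : Xh →L[ℝ] Qh →L[ℝ] ℝ :=
    (b.domRestrict₁₂ Xh Qh).mkContinuous₂ D fun u μ ↦ hbbd u u.2 μ μ.2
  have hah : ∀ u, bh u = 0 → α * ‖u‖ ^ 2 ≤ ah u u := fun u hu ↦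
    hcoer u u.2 fun μ hμ ↦ DFunLike.congr_fun hu ⟨μ, hμ⟩
  have hbh : ∀ μ, βh * ‖μ‖ ≤ ‖bh.flip μ‖ := fun μ ↦
    (hinfsup μ μ.2).trans <| sSup_div_norm_le (norm_nonneg _) fun v hv ↦
      (le_abs_self _).trans ((bh.flip μ).le_opNorm ⟨v, hv⟩)
  have hequiv : ∀ (u : Xh) (l : Qh),
      (ah u + bh.flip l = c.comp Xh.subtypeL ∧ bh u = d.comp Qh.subtypeL) ↔
        (∀ v ∈ Xh, a u v + b v l = c v) ∧ ∀ μ ∈ Qh, b u μ = d μ := fun u l ↦ by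
    rw [ContinuousLinearMap.ext_iff, ContinuousLinearMap.ext_iff, Subtype.forall, Subtype.forall]
    rfl
  obtain ⟨⟨u, l⟩, hsol, huniq⟩ :=
    existsUnique_saddlePoint hα hβh hah hbh (c.comp Xh.subtypeL) (d.comp Qh.subtypeL)
  refine ⟨(u, l), ⟨u.2, l.2, (hequiv u l).mp hsol⟩, ?_⟩
  rintro ⟨u', l'⟩ ⟨hu', hl', hsol'⟩
  have heq := huniq (⟨u', hu'⟩, ⟨l', hl'⟩) ((hequiv _ _).mpr hsol')
  exact Prod.ext (congrArg (·.1.val) heq) (congrArg (·.2.val) heq)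

/-- **Well-posedness of the conforming Galerkin discretization of the saddle point
problem.**  Let `a` be a coercive and bounded bilinear form on a real Hilbert space
`X`, and `b` a bounded bilinear form on `X × Q`.  Let `X_h ⊆ X` and `Q_h ⊆ Q` be
closed subspaces such that the discrete inf-sup condition holds with constant
`β_h > 0`.  Then for all continuous linear functionals `c : X → ℝ`, `d : Q → ℝ`
the discrete saddle point problem has a unique solution `(u_h, λ_h) ∈ X_h × Q_h`. -/
theorem discrete_saddle_point_wellposed
    {X Q : Type*}
    [NormedAddCommGroup X] [InnerProductSpace ℝ X] [CompleteSpace X]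
    [NormedAddCommGroup Q] [InnerProductSpace ℝ Q] [CompleteSpace Q]
    (a : X →ₗ[ℝ] X →ₗ[ℝ] ℝ) (b : X →ₗ[ℝ] Q →ₗ[ℝ] ℝ)
    (α C D : ℝ) (hα : 0 < α) (hC : 0 < C) (hD : 0 < D)
    (hcoer : ∀ u : X, α * ‖u‖ ^ 2 ≤ a u u)
    (habd : ∀ u v : X, |a u v| ≤ C * ‖u‖ * ‖v‖)
    (hbbd : ∀ (u : X) (μ : Q), |b u μ| ≤ D * ‖u‖ * ‖μ‖)
    (Xh : Submodule ℝ X) (Qh : Submodule ℝ Q)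
    (hXh : IsClosed (Xh : Set X)) (hQh : IsClosed (Qh : Set Q))
    (βh : ℝ) (hβh : 0 < βh)
    (hinfsup : ∀ μh ∈ Qh,
      βh * ‖μh‖ ≤ sSup {r : ℝ | ∃ vh ∈ Xh, vh ≠ 0 ∧ r = b vh μh / ‖vh‖})
    (c : X →L[ℝ] ℝ) (d : Q →L[ℝ] ℝ) :
    ∃! p : X × Q, p.1 ∈ Xh ∧ p.2 ∈ Qh ∧
      (∀ vh ∈ Xh, a p.1 vh + b vh p.2 = c vh) ∧
      (∀ μh ∈ Qh, b p.1 μh = d μh) :=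
  discrete_saddle_point_wellposed_general a b hα hXh.isComplete hQh.isComplete
    (fun u _ _ ↦ hcoer u) (fun u _ v _ ↦ habd u v) (fun u _ μ _ ↦ hbbd u μ) hβh hinfsup c d
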